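/- Let (V, ω) be a symplectic vector space, let G be a compact subgroup of GL(V), and let ε : G → {±1} be a continuous homomorphism with ω(gv, gw) = ε(g) ω(v, w) for all g ∈ G and v, w ∈ V. Then the set 𝒥(ω)^G = {J ∈ End(V) : J is a complex structure compatible with ω and g ∘ J = ε(g) · J ∘ g for all g ∈ G}, equipped with the subspace topology from End(V), is nonempty and contractible. -/

import Mathlib

/-!
Existence: averaging over `G` gives a `G`-invariant inner product `b`, and `ω(v, w) = b(Av, w)`
defines an invertible `b`-skew `A`. Its phase `J = A (-A²)^(-1/2)` is a compatible complex
structure. It depends only on `(b, ω)`, so it satisfies `gJ = ε(g) Jg` because `g` preserves `b`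
and scales `ω` by `ε(g)`. Taking the inverse square root to be a polynomial in `-A²` makes its
commutation and symmetry properties immediate.

Contractibility: fix `J₀ ∈ 𝒥(ω)^G`. As for the Siegel upper half space, the Cayley transform
`J ↦ (J₀ + J)⁻¹ (J₀ - J)` maps `𝒥(ω)^G` homeomorphically onto a disk: the `J₀`-antilinear,
`ω`-skew, `G`-equivariant strict contractions for the inner product `ω(·, J₀ ·)`. This disk is
star-shaped about `0`.
-/

/-- The set `𝒥(ω)^G` of `ω`-compatible complex structures on `V` that are invariant under the
sesquisymplectic action of `G` (twisted by the character `ε`). -/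
def compatJSet {V : Type*} [NormedAddCommGroup V] [NormedSpace ℝ V]
    (ω : V →ₗ[ℝ] V →ₗ[ℝ] ℝ) (G : Subgroup (V →L[ℝ] V)ˣ) (ε : G → ℝ) :
    Set (V →L[ℝ] V) :=
  {J | (∀ v, J (J v) = - v) ∧ (∀ v w, ω (J v) (J w) = ω v w) ∧
    (∀ v, v ≠ 0 → 0 < ω v (J v)) ∧
    ∀ (g : G) (v : V), ((g : (V →L[ℝ] V)ˣ) : V →L[ℝ] V) (J v)
      = ε g • J (((g : (V →L[ℝ] V)ˣ) : V →L[ℝ] V) v)}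

open Polynomial MeasureTheory

/-! ### Polynomials in an endomorphism -/

theorem commute_aeval {R A : Type*} [CommSemiring R] [Semiring A] [Algebra R A] {a x : A}
    (h : Commute a x) (p : R[X]) : Commute a (aeval x p) :=
  Algebra.commute_of_mem_adjoin_singleton_of_commute (aeval_mem_adjoin_singleton R x) h

theorem isSelfAdjoint_aeval {R M : Type*} [CommRing R] [AddCommGroup M] [Module R M]
    {B : M →ₗ[R] M →ₗ[R] R} {T : Module.End R M} (hT : LinearMap.IsSelfAdjoint B T) (p : R[X]) :
    LinearMap.IsSelfAdjoint B (aeval T p) := by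
  induction p using Polynomial.induction_on' with
  | add p q hp hq =>
    rw [map_add]
    exact hp.add hq
  | monomial n a =>
    have hpow : LinearMap.IsSelfAdjoint B (T ^ n : Module.End R M) := by
      induction n with
      | zero => exact LinearMap.isAdjointPair_one
      | succ n ih => simpa only [LinearMap.IsSelfAdjoint, ← pow_succ, ← pow_succ'] using ih.mul hT
    rw [aeval_monomial, ← Algebra.smul_def]
    exact hpow.smul a

theorem exists_aeval_apply_eq_smul {K V : Type*} [Field K] [AddCommGroup V] [Module K V]
    [FiniteDimensional K V] (T : Module.End K V) (f : K → K) :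
    ∃ p : K[X], ∀ (μ : K) (v : V), T v = μ • v → aeval T p v = f μ • v := by
  classical
  refine ⟨Lagrange.interpolate T.finite_hasEigenvalue.toFinset id f, fun μ v hv => ?_⟩
  rcases eq_or_ne v 0 with rfl | hv0
  · simp only [map_zero, smul_zero]
  have hμ : T.HasEigenvalue μ :=
    Module.End.hasEigenvalue_of_hasEigenvector ⟨Module.End.mem_eigenspace_iff.2 hv, hv0⟩
  have heval : eval (id μ) (Lagrange.interpolate T.finite_hasEigenvalue.toFinset id f) = f μ :=
    Lagrange.eval_interpolate_at_node f Function.injective_id.injOn (by simpa using hμ)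
  rw [Module.End.aeval_apply_of_mem_apply_eq_smul hv, ← heval, id]

theorem exists_aeval_pow_mul_eq_one {V : Type*} [AddCommGroup V] [Module ℝ V]
    [FiniteDimensional ℝ V] {T : Module.End ℝ V} (hT : ⨆ μ, T.eigenspace μ = ⊤)
    (hpos : ∀ μ, T.HasEigenvalue μ → 0 < μ) {n : ℕ} (hn : n ≠ 0) :
    ∃ p : ℝ[X], aeval T p ^ n * T = 1 := by
  obtain ⟨p, hp⟩ := exists_aeval_apply_eq_smul T fun x => (x ^ (n⁻¹ : ℝ))⁻¹
  refine ⟨p, LinearMap.ext fun v => ?_⟩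
  have hv : v ∈ ⨆ μ, T.eigenspace μ := hT ▸ Submodule.mem_top
  induction hv using Submodule.iSup_induction' with
  | zero => simp only [map_zero]
  | add x y _ _ hx hy => rw [map_add, map_add, hx, hy]
  | mem μ v hv =>
    rcases eq_or_ne v 0 with rfl | hv0
    · simp only [map_zero]
    have hμ : 0 < μ := hpos μ (Module.End.hasEigenvalue_of_hasEigenvector ⟨hv, hv0⟩)
    have hTv : T v = μ • v := Module.End.mem_eigenspace_iff.1 hv
    have hpow : ∀ k : ℕ, (aeval T p ^ k) v = ((μ ^ (n⁻¹ : ℝ))⁻¹) ^ k • v := fun k => by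
      induction k with
      | zero => simp
      | succ k ih => rw [pow_succ', Module.End.mul_apply, ih, map_smul, hp μ v hTv, smul_smul,
          pow_succ]
    rw [Module.End.mul_apply, hTv, map_smul, hpow, smul_smul, inv_pow,
      Real.rpow_inv_natCast_pow hμ.le hn, mul_inv_cancel₀ hμ.ne', one_smul, Module.End.one_apply]

/-! ### Endomorphisms of an inner product -/

section PosDef

variable {V : Type*} [AddCommGroup V] [Module ℝ V] {b : LinearMap.BilinForm ℝ V}

theorem separatingLeft_of_posDef (hpos : ∀ v, v ≠ 0 → 0 < b v v) : b.SeparatingLeft :=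
  LinearMap.BilinForm.separatingLeft_of_anisotropic
    (QuadraticMap.PosDef.anisotropic (Q := b.toQuadraticMap) hpos)

theorem nondegenerate_of_posDef (hsymm : b.IsSymm) (hpos : ∀ v, v ≠ 0 → 0 < b v v) :
    b.Nondegenerate :=
  hsymm.isRefl.nondegenerate_iff_separatingLeft.2 (separatingLeft_of_posDef hpos)

theorem iSup_eigenspace_eq_top_of_isSelfAdjoint [FiniteDimensional ℝ V] (hsymm : b.IsSymm)
    (hpos : ∀ v, v ≠ 0 → 0 < b v v) {T : Module.End ℝ V} (hT : LinearMap.IsSelfAdjoint b T) :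
    ⨆ μ, T.eigenspace μ = ⊤ := by
  let core : InnerProductSpace.Core ℝ V :=
    { inner := fun v w => b v w
      conj_inner_symm := fun v w => hsymm.eq w v
      re_inner_nonneg := fun v => by
        rcases eq_or_ne v 0 with rfl | hv
        · simp
        · exact (hpos v hv).le
      add_left := fun u v w => LinearMap.map_add₂ b u v w
      smul_left := fun v w r => LinearMap.map_smul₂ b r v w
      definite := fun v hv => by_contra fun h => (hpos v h).ne' hv }
  let : NormedAddCommGroup V := core.toNormedAddCommGroup
  let : InnerProductSpace ℝ V := InnerProductSpace.ofCore core.toCore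
  have hT' : LinearMap.IsSymmetric T := hT
  exact Submodule.orthogonal_eq_bot_iff.1 hT'.orthogonalComplement_iSup_eigenspaces_eq_bot

theorem exists_aeval_inv_sqrt [FiniteDimensional ℝ V] (hsymm : b.IsSymm)
    (hpos : ∀ v, v ≠ 0 → 0 < b v v) {T : Module.End ℝ V} (hT : LinearMap.IsSelfAdjoint b T)
    (hTpos : ∀ v, v ≠ 0 → 0 < b v (T v)) :
    ∃ p : ℝ[X], aeval T p ^ 2 * T = 1 ∧ ∀ v, v ≠ 0 → 0 < b v (aeval T p v) := by
  have heigen : ∀ μ, T.HasEigenvalue μ → 0 < μ := fun μ hμ => by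
    obtain ⟨v, hv⟩ := hμ.exists_hasEigenvector
    have h := hTpos v hv.2
    rw [hv.apply_eq_smul, map_smul, smul_eq_mul] at h
    exact pos_of_mul_pos_left h (hpos v hv.2).le
  -- An inverse fourth root `q(T)` is needed: its square is positive because `q(T)` is symmetric.
  obtain ⟨q, hq⟩ := exists_aeval_pow_mul_eq_one
    (iSup_eigenspace_eq_top_of_isSelfAdjoint hsymm hpos hT) heigen four_ne_zero
  refine ⟨q ^ 2, by rw [map_pow, ← pow_mul, hq], fun v hv => ?_⟩
  have hqv : aeval T q v ≠ 0 := fun h => hv <| by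
    have hcomm : aeval T q ^ 4 * T = T * aeval T q ^ 3 * aeval T q := by
      rw [mul_assoc, ← pow_succ, ((commute_aeval (Commute.refl T) q).pow_right 4).eq]
    rw [← Module.End.one_apply (R := ℝ) v, ← hq, hcomm, Module.End.mul_apply, h, map_zero]
  rw [map_pow, sq, Module.End.mul_apply, ← isSelfAdjoint_aeval hT q]
  exact hpos _ hqv

theorem mul_eq_smul_mul_of_isometry [FiniteDimensional ℝ V] (hpos : ∀ v, v ≠ 0 → 0 < b v v)
    {ω : LinearMap.BilinForm ℝ V} {A g : Module.End ℝ V} {c : ℝ}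
    (hA : ∀ v w, b (A v) w = ω v w) (hc : c * c = 1) (hgb : ∀ v w, b (g v) (g w) = b v w)
    (hgω : ∀ v w, ω (g v) (g w) = c * ω v w) : g * A = c • (A * g) := by
  have hinj : Function.Injective g := (injective_iff_map_eq_zero g).2 fun v hv => by
    by_contra hv0
    exact (hpos v hv0).ne' (by rw [← hgb, hv, map_zero])
  refine LinearMap.ext fun v => sub_eq_zero.1 <| separatingLeft_of_posDef hpos _ fun w => ?_
  obtain ⟨u, rfl⟩ := LinearMap.surjective_of_injective hinj w
  calc b (g (A v) - c • A (g v)) (g u) = ω v u - c * (c * ω v u) := by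
        rw [LinearMap.map_sub₂, LinearMap.map_smul₂, hgb, hA, hA, hgω, smul_eq_mul]
    _ = 0 := by rw [← mul_assoc, hc, one_mul, sub_self]

theorem exists_compatible_complexStructure [FiniteDimensional ℝ V] (hsymm : b.IsSymm)
    (hpos : ∀ v, v ≠ 0 → 0 < b v v) {ω : LinearMap.BilinForm ℝ V} (halt : ω.IsAlt)
    (hω : ω.SeparatingLeft) :
    ∃ J : Module.End ℝ V, J * J = -1 ∧ (∀ v w, ω (J v) (J w) = ω v w) ∧
      (∀ v, v ≠ 0 → 0 < ω v (J v)) ∧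
      ∀ (g : Module.End ℝ V) (c : ℝ), c * c = 1 → (∀ v w, b (g v) (g w) = b v w) →
        (∀ v w, ω (g v) (g w) = c * ω v w) → g * J = c • (J * g) := by
  let A : Module.End ℝ V := ω.symmCompOfNondegenerate b (nondegenerate_of_posDef hsymm hpos)
  have hA : ∀ v w, b (A v) w = ω v w := fun v w =>
    ω.symmCompOfNondegenerate_left_apply (nondegenerate_of_posDef hsymm hpos) w v
  have hbskew : ∀ v w, b (A v) w = - b v (A w) := fun v w => by
    rw [hA, hsymm.eq v, hA, LinearMap.IsAlt.neg halt]
  have hωskew : ∀ v w, ω (A v) w = - ω v (A w) := fun v w => by rw [← hA, hbskew, hA]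
  have hAne : ∀ v, v ≠ 0 → A v ≠ 0 := fun v hv hAv =>
    hv <| hω v fun w => by rw [← hA, hAv, map_zero, LinearMap.zero_apply]
  obtain ⟨p, hsq, hPpos⟩ := exists_aeval_inv_sqrt (T := -(A * A)) hsymm hpos
    (fun v w => by simp [hbskew])
    (fun v hv => by simpa [hbskew] using hpos _ (hAne v hv))
  set P := aeval (-(A * A)) p
  have hAP : Commute A P := commute_aeval ((Commute.refl A).mul_right (Commute.refl A)).neg_right p
  have hωP : LinearMap.IsSelfAdjoint ω P := isSelfAdjoint_aeval (fun v w => by simp [hωskew]) p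
  have hJ : A * P * (A * P) = -1 := by
    rw [hAP.symm.mul_mul_mul_comm, ← sq P, ((hAP.mul_left hAP).pow_right 2).eq, ← hsq, mul_neg,
      neg_neg]
  have hJskew : ∀ v w, ω ((A * P) v) w = - ω v ((A * P) w) := fun v w => by
    rw [Module.End.mul_apply, hωskew, hωP, ← Module.End.mul_apply, ← hAP.eq]
  refine ⟨A * P, hJ, fun v w => ?_, fun v hv => ?_, fun g c hc hgb hgω => ?_⟩
  · rw [hJskew, ← Module.End.mul_apply, hJ, LinearMap.neg_apply, Module.End.one_apply, map_neg,
      neg_neg]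
  · rw [hAP.eq, Module.End.mul_apply, ← hA]
    exact hPpos _ (hAne v hv)
  · have hgA : g * A = c • (A * g) := mul_eq_smul_mul_of_isometry hpos hA hc hgb hgω
    have hgA₂ : Commute g (A * A) := by
      rw [Commute, SemiconjBy, ← mul_assoc, hgA, smul_mul_assoc, mul_assoc, hgA, mul_smul_comm,
        smul_smul, hc, one_smul, mul_assoc]
    rw [← mul_assoc, hgA, smul_mul_assoc, mul_assoc, (commute_aeval hgA₂.neg_right p).eq,
      mul_assoc]

end PosDef

/-! ### Invariant inner products -/

theorem exists_invariant_posDef {V G : Type*} [NormedAddCommGroup V] [NormedSpace ℝ V]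
    [FiniteDimensional ℝ V] [Group G] [TopologicalSpace G] [IsTopologicalGroup G] [CompactSpace G]
    (ρ : G →* (V →L[ℝ] V)) (hρ : Continuous ρ) :
    ∃ b : LinearMap.BilinForm ℝ V, b.IsSymm ∧ (∀ v, v ≠ 0 → 0 < b v v) ∧
      ∀ g v w, b (ρ g v) (ρ g w) = b v w := by
  let : MeasurableSpace G := borel G
  have : BorelSpace G := ⟨rfl⟩
  let F : V → V → G → ℝ := fun v w g => inner ℝ (toEuclidean (ρ g⁻¹ v)) (toEuclidean (ρ g⁻¹ w))
  have hF : ∀ v w, Continuous (F v w) := fun v w => by fun_prop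
  have hFint : ∀ v w, Integrable (F v w) Measure.haar := fun v w =>
    (hF v w).integrable_of_hasCompactSupport (HasCompactSupport.of_compactSpace _)
  let b : LinearMap.BilinForm ℝ V := LinearMap.mk₂ ℝ (fun v w => ∫ g, F v w g ∂Measure.haar)
    (fun u v w => by
      rw [← integral_add (hFint u w) (hFint v w)]
      simp only [F, map_add, inner_add_left])
    (fun c v w => by
      rw [smul_eq_mul, ← integral_const_mul]
      simp only [F, map_smul, real_inner_smul_left])
    (fun u v w => by
      rw [← integral_add (hFint u v) (hFint u w)]
      simp only [F, map_add, inner_add_right])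
    (fun c v w => by
      rw [smul_eq_mul, ← integral_const_mul]
      simp only [F, map_smul, real_inner_smul_right])
  have hb : ∀ v w, b v w = ∫ g, F v w g ∂Measure.haar := fun v w => rfl
  refine ⟨b, ⟨fun v w => ?_⟩, fun v hv => ?_, fun h v w => ?_⟩
  · simp only [hb, F, real_inner_comm]
  · rw [hb]
    exact (hF v v).integral_pos_of_hasCompactSupport_nonneg_nonzero
      (HasCompactSupport.of_compactSpace _) (fun g => real_inner_self_nonneg) (x := 1)
      (by simpa [F] using hv)
  · rw [hb, hb, ← integral_mul_left_eq_self (F v w) h⁻¹]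
    simp [F]

theorem compatJSet_nonempty {V : Type*} [NormedAddCommGroup V] [NormedSpace ℝ V]
    [FiniteDimensional ℝ V] {ω : V →ₗ[ℝ] V →ₗ[ℝ] ℝ} (halt : ω.IsAlt) (hω : ω.SeparatingLeft)
    {G : Subgroup (V →L[ℝ] V)ˣ} (hG : IsCompact (G : Set (V →L[ℝ] V)ˣ)) {ε : G → ℝ}
    (hε : ∀ g, ε g * ε g = 1)
    (hsesq : ∀ (g : G) (v w : V), ω (g.1.1 v) (g.1.1 w) = ε g * ω v w) :
    (compatJSet ω G ε).Nonempty := by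
  have : CompactSpace G := isCompact_iff_compactSpace.1 hG
  obtain ⟨b, hsymm, hpos, hinv⟩ := exists_invariant_posDef ((Units.coeHom _).comp G.subtype)
    (Units.continuous_val.comp continuous_subtype_val)
  obtain ⟨J, hsq, hJω, hJpos, hJnat⟩ := exists_compatible_complexStructure hsymm hpos halt hω
  exact ⟨LinearMap.toContinuousLinearMap J, LinearMap.congr_fun hsq, hJω, hJpos, fun g =>
    LinearMap.congr_fun (hJnat (g.1.1 : V →ₗ[ℝ] V) (ε g) (hε g) (hinv g) (hsesq g))⟩

/-! ### The Cayley transform -/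

section Ring

variable {R : Type*} [Ring R] {J₀ J S : R}

/-- The Cayley transform of `J` relative to the base point `J₀`. It has the junk value `0` when
`J₀ + J` is not invertible. -/
noncomputable def cayley (J₀ J : R) : R := Ring.inverse (J₀ + J) * (J₀ - J)

/-- The inverse of the Cayley transform relative to `J₀`, written as the conjugation of `J₀` by
`1 + S`. It has the junk value `0` when `1 + S` is not invertible. -/
noncomputable def invCayley (J₀ S : R) : R := (1 + S) * J₀ * Ring.inverse (1 + S)

theorem cayley_mul_add (hJ₀ : J₀ * J₀ = -1) (hJ : J * J = -1) (hu : IsUnit (J₀ + J)) :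
    cayley J₀ J * (J₀ + J) = J - J₀ := by
  rw [cayley, mul_assoc, Ring.inverse_mul_eq_iff_eq_mul _ _ _ hu]
  simp only [sub_mul, mul_add, add_mul, mul_sub, hJ₀, hJ]
  abel

theorem invCayley_mul_one_add (hu : IsUnit (1 + S)) :
    invCayley J₀ S * (1 + S) = (1 + S) * J₀ := by
  rw [invCayley, mul_assoc, Ring.inverse_mul_cancel _ hu, mul_one]

theorem invCayley_cayley (hJ₀ : J₀ * J₀ = -1) (hJ : J * J = -1) (hu : IsUnit (J₀ + J))
    (hS : IsUnit (1 + cayley J₀ J)) : invCayley J₀ (cayley J₀ J) = J := by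
  have hmul : (1 + cayley J₀ J) * (J₀ + J) = 2 * J := by
    rw [add_mul, cayley_mul_add hJ₀ hJ hu]
    noncomm_ring
  have hswap : J₀ * (J₀ + J) = (J₀ + J) * J := by
    rw [mul_add, add_mul, hJ₀, hJ, add_comm]
  refine ((Ring.eq_mul_inverse_iff_mul_eq _ _ _ hS).2 ?_).symm
  refine hu.mul_right_cancel ?_
  calc J * (1 + cayley J₀ J) * (J₀ + J) = 2 * J * J := by rw [mul_assoc, hmul]; noncomm_ring
    _ = (1 + cayley J₀ J) * J₀ * (J₀ + J) := by
      rw [mul_assoc _ J₀, hswap, ← mul_assoc (1 + cayley J₀ J), hmul]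

theorem cayley_invCayley (hanti : S * J₀ = -(J₀ * S)) (hS : IsUnit (1 + S))
    (hu : IsUnit (J₀ + invCayley J₀ S)) : cayley J₀ (invCayley J₀ S) = S := by
  have hK := invCayley_mul_one_add (J₀ := J₀) hS
  have hsub : (J₀ - invCayley J₀ S) * (1 + S) = 2 * (J₀ * S) := by
    rw [sub_mul, hK, add_mul, hanti]
    noncomm_ring
  have hadd : (J₀ + invCayley J₀ S) * (1 + S) = 2 * J₀ := by
    rw [add_mul, hK, add_mul, hanti]
    noncomm_ring
  have hcomm : S * (1 + S) = (1 + S) * S := by rw [mul_add, add_mul, mul_one, one_mul]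
  refine (Ring.inverse_mul_eq_iff_eq_mul _ _ _ hu).2 (hS.mul_right_cancel ?_)
  calc (J₀ - invCayley J₀ S) * (1 + S) = (J₀ + invCayley J₀ S) * (1 + S) * S := by
        rw [hsub, hadd, mul_assoc]
    _ = (J₀ + invCayley J₀ S) * S * (1 + S) := by rw [mul_assoc, ← hcomm, mul_assoc]

end Ring

theorem continuous_ringInverse_comp {X R : Type*} [TopologicalSpace X] [NormedRing R]
    [HasSummableGeomSeries R] {f : X → R} (hf : Continuous f) (hu : ∀ x, IsUnit (f x)) :
    Continuous fun x => Ring.inverse (f x) :=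
  continuous_iff_continuousAt.2 fun x => by
    obtain ⟨u, hux⟩ := hu x
    exact ContinuousAt.comp (g := Ring.inverse) (hux ▸ NormedRing.inverse_continuousAt u)
      hf.continuousAt

theorem isUnit_of_injective {𝕜 V : Type*} [NontriviallyNormedField 𝕜] [CompleteSpace 𝕜]
    [NormedAddCommGroup V] [NormedSpace 𝕜 V] [FiniteDimensional 𝕜 V] {E : V →L[𝕜] V}
    (hE : Function.Injective E) : IsUnit E := by
  have : CompleteSpace V := FiniteDimensional.complete 𝕜 V
  exact ContinuousLinearMap.isUnit_iff_bijective.2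
    ⟨hE, LinearMap.surjective_of_injective (f := (E : V →ₗ[𝕜] V)) hE⟩

/-! ### Contractibility -/

/-- The disk model of `𝒥(ω)^G` at the base point `J₀`, which is the image of the Cayley transform:
the `J₀`-antilinear, `ω`-skew, `G`-equivariant endomorphisms that are strict contractions for the
inner product `ω(·, J₀ ·)`. -/
def siegelDisk {V : Type*} [NormedAddCommGroup V] [NormedSpace ℝ V]
    (ω : V →ₗ[ℝ] V →ₗ[ℝ] ℝ) (G : Subgroup (V →L[ℝ] V)ˣ) (J₀ : V →L[ℝ] V) : Set (V →L[ℝ] V) :=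
  {S | (∀ v, S (J₀ v) = - J₀ (S v)) ∧ (∀ v w, ω (S v) w = - ω v (S w)) ∧
    (∀ v, v ≠ 0 → ω (S v) (J₀ (S v)) < ω v (J₀ v)) ∧
    ∀ (g : G) (v : V), g.1.1 (S v) = S (g.1.1 v)}

section SiegelDisk

variable {V : Type*} [NormedAddCommGroup V] [NormedSpace ℝ V] {ω : V →ₗ[ℝ] V →ₗ[ℝ] ℝ}
  {G : Subgroup (V →L[ℝ] V)ˣ} {ε : G → ℝ} {J₀ J S : V →L[ℝ] V}

theorem mul_self_eq_neg_one_of_mem_compatJSet (hJ : J ∈ compatJSet ω G ε) : J * J = -1 :=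
  ContinuousLinearMap.ext hJ.1

theorem zero_mem_siegelDisk (h₀ : J₀ ∈ compatJSet ω G ε) : 0 ∈ siegelDisk ω G J₀ :=
  ⟨by simp, by simp, by simpa using h₀.2.2.1, by simp⟩

theorem starConvex_siegelDisk (h₀ : J₀ ∈ compatJSet ω G ε) :
    StarConvex ℝ 0 (siegelDisk ω G J₀) := by
  rw [starConvex_zero_iff]
  rintro S ⟨hanti, hskew, hcontr, hcomm⟩ t ht₀ ht₁
  refine ⟨fun v => by simp [hanti], fun v w => by simp [hskew], fun v hv => ?_,
    fun g v => by simp [hcomm]⟩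
  have hnonneg : 0 ≤ ω (S v) (J₀ (S v)) := by
    rcases eq_or_ne (S v) 0 with h | h
    · simp [h]
    · exact (h₀.2.2.1 _ h).le
  calc ω ((t • S) v) (J₀ ((t • S) v)) = t * t * ω (S v) (J₀ (S v)) := by simp [mul_assoc]
    _ ≤ ω (S v) (J₀ (S v)) := mul_le_of_le_one_left hnonneg (mul_le_one₀ ht₁ ht₀ ht₁)
    _ < ω v (J₀ v) := hcontr v hv

variable [FiniteDimensional ℝ V]

theorem isUnit_add_of_mem_compatJSet (h₀ : J₀ ∈ compatJSet ω G ε) (hJ : J ∈ compatJSet ω G ε) :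
    IsUnit (J₀ + J) := by
  refine isUnit_of_injective ((injective_iff_map_eq_zero _).2 fun v hv => ?_)
  by_contra hv0
  have hpos : 0 < ω v ((J₀ + J) v) := by
    simpa using add_pos (h₀.2.2.1 v hv0) (hJ.2.2.1 v hv0)
  exact hpos.ne' (by rw [hv, map_zero])

theorem isUnit_one_add_of_mem_siegelDisk (hS : S ∈ siegelDisk ω G J₀) : IsUnit (1 + S) := by
  refine isUnit_of_injective ((injective_iff_map_eq_zero _).2 fun v hv => ?_)
  by_contra hv0
  have hSv : S v = - v := (neg_eq_of_add_eq_zero_right hv).symm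
  simpa [hSv] using hS.2.2.1 v hv0

theorem cayley_mem_siegelDisk (h₀ : J₀ ∈ compatJSet ω G ε) (hJ : J ∈ compatJSet ω G ε) :
    cayley J₀ J ∈ siegelDisk ω G J₀ := by
  have hu := isUnit_add_of_mem_compatJSet h₀ hJ
  have hS : ∀ a, cayley J₀ J (J₀ a + J a) = J a - J₀ a :=
    DFunLike.congr_fun (cayley_mul_add (mul_self_eq_neg_one_of_mem_compatJSet h₀)
      (mul_self_eq_neg_one_of_mem_compatJSet hJ) hu)
  have hsurj : ∀ v, ∃ a, J₀ a + J a = v := (ContinuousLinearMap.isUnit_iff_bijective.1 hu).2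
  obtain ⟨hsq₀, hω₀, -, hg₀⟩ := h₀
  obtain ⟨hsq, hω, hpos, hg⟩ := hJ
  refine ⟨fun v => ?_, fun v w => ?_, fun v hv => ?_, fun g v => ?_⟩
  · obtain ⟨a, rfl⟩ := hsurj v
    have hJ₀a : J₀ (J₀ a + J a) = J₀ (J a) + J (J a) := by rw [map_add, hsq₀, hsq, add_comm]
    rw [hJ₀a, hS, hS, map_sub, hsq, hsq₀]
    abel
  · obtain ⟨a, rfl⟩ := hsurj v
    obtain ⟨c, rfl⟩ := hsurj w
    rw [hS, hS]
    simp only [map_add, map_sub, LinearMap.add_apply, LinearMap.sub_apply, hω, hω₀]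
    ring
  · obtain ⟨a, rfl⟩ := hsurj v
    have ha : a ≠ 0 := by rintro rfl; simp at hv
    have hJa : ω (J a) a = - ω a (J a) := by rw [← hω, hsq, map_neg, LinearMap.neg_apply]
    rw [hS]
    simp only [map_add, map_sub, LinearMap.add_apply, LinearMap.sub_apply, hω₀, hsq₀, map_neg, hJa]
    linarith [hpos a ha]
  · obtain ⟨a, rfl⟩ := hsurj v
    rw [hS, map_add, map_sub, hg, hg₀, ← smul_add, map_smul, hS, smul_sub]

theorem invCayley_mem_compatJSet (h₀ : J₀ ∈ compatJSet ω G ε) (hS : S ∈ siegelDisk ω G J₀) :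
    invCayley J₀ S ∈ compatJSet ω G ε := by
  have hu := isUnit_one_add_of_mem_siegelDisk hS
  have hK : ∀ a, invCayley J₀ S (a + S a) = J₀ a + S (J₀ a) :=
    DFunLike.congr_fun (invCayley_mul_one_add hu)
  have hsurj : ∀ v, ∃ a, a + S a = v := (ContinuousLinearMap.isUnit_iff_bijective.1 hu).2
  obtain ⟨hsq, hω, -, hg⟩ := h₀
  obtain ⟨hanti, hskew, hcontr, hcomm⟩ := hS
  have hωS : ∀ a c, ω (a + S a) (c + S c) = ω a c + ω (S a) (S c) := fun a c => by
    simp only [map_add, LinearMap.add_apply, hskew a c]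
    ring
  refine ⟨fun v => ?_, fun v w => ?_, fun v hv => ?_, fun g v => ?_⟩
  · obtain ⟨a, rfl⟩ := hsurj v
    rw [hK, hK, hsq, map_neg, neg_add]
  · obtain ⟨a, rfl⟩ := hsurj v
    obtain ⟨c, rfl⟩ := hsurj w
    rw [hK, hK, hωS, hωS]
    simp [hanti, hω]
  · obtain ⟨a, rfl⟩ := hsurj v
    have ha : a ≠ 0 := by rintro rfl; simp at hv
    rw [hK, hωS, hanti, map_neg]
    linarith [hcontr a ha]
  · obtain ⟨a, rfl⟩ := hsurj v
    rw [hK, map_add, map_add, hcomm, hg, hcomm, hK, map_smul, smul_add]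

/-- The Cayley transform at `J₀`, as a homeomorphism from `𝒥(ω)^G` to its disk model. -/
noncomputable def cayleyHomeomorph (h₀ : J₀ ∈ compatJSet ω G ε) :
    compatJSet ω G ε ≃ₜ siegelDisk ω G J₀ :=
  have : CompleteSpace V := FiniteDimensional.complete ℝ V
  { toFun := fun J => ⟨cayley J₀ J, cayley_mem_siegelDisk h₀ J.2⟩
    invFun := fun S => ⟨invCayley J₀ S, invCayley_mem_compatJSet h₀ S.2⟩
    left_inv := fun J => Subtype.ext <|
      invCayley_cayley (mul_self_eq_neg_one_of_mem_compatJSet h₀)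
        (mul_self_eq_neg_one_of_mem_compatJSet J.2) (isUnit_add_of_mem_compatJSet h₀ J.2)
        (isUnit_one_add_of_mem_siegelDisk (cayley_mem_siegelDisk h₀ J.2))
    right_inv := fun S => Subtype.ext <|
      cayley_invCayley (ContinuousLinearMap.ext S.2.1) (isUnit_one_add_of_mem_siegelDisk S.2)
        (isUnit_add_of_mem_compatJSet h₀ (invCayley_mem_compatJSet h₀ S.2))
    continuous_toFun := by
      refine Continuous.subtype_mk (Continuous.mul ?_ (by fun_prop)) _
      exact continuous_ringInverse_comp (by fun_prop) fun J => isUnit_add_of_mem_compatJSet h₀ J.2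
    continuous_invFun := by
      refine Continuous.subtype_mk (Continuous.mul (by fun_prop) ?_) _
      exact continuous_ringInverse_comp (by fun_prop) fun S =>
        isUnit_one_add_of_mem_siegelDisk S.2 }

theorem contractibleSpace_compatJSet (h₀ : J₀ ∈ compatJSet ω G ε) :
    ContractibleSpace (compatJSet ω G ε) :=
  have : ContractibleSpace (siegelDisk ω G J₀) :=
    (starConvex_siegelDisk h₀).contractibleSpace ⟨0, zero_mem_siegelDisk h₀⟩
  (cayleyHomeomorph h₀).contractibleSpace

end SiegelDisk

/-- For a compact subgroup `G` of `GL(V)` acting sesquisymplectically on the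
symplectic vector space `(V, ω)` relative to a continuous character `ε : G → {±1}`, the space
`𝒥(ω)^G` of invariant compatible complex structures (with the subspace topology from `End(V)`)
is nonempty and contractible. -/
theorem stmt5 {V : Type*} [NormedAddCommGroup V] [NormedSpace ℝ V] [FiniteDimensional ℝ V]
    (ω : V →ₗ[ℝ] V →ₗ[ℝ] ℝ)
    (halt : ∀ v, ω v v = 0)
    (hnd : ∀ v, (∀ w, ω v w = 0) → v = 0)
    (G : Subgroup (V →L[ℝ] V)ˣ)
    (hG : IsCompact (G : Set (V →L[ℝ] V)ˣ))
    (ε : G → ℝ) (hεcont : Continuous ε)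
    (hεmul : ∀ g h : G, ε (g * h) = ε g * ε h)
    (hεval : ∀ g : G, ε g = 1 ∨ ε g = -1)
    (hsesq : ∀ (g : G) (v w : V),
      ω (((g : (V →L[ℝ] V)ˣ) : V →L[ℝ] V) v) (((g : (V →L[ℝ] V)ˣ) : V →L[ℝ] V) w)
        = ε g * ω v w) :
    (compatJSet ω G ε).Nonempty ∧ ContractibleSpace (compatJSet ω G ε) := by
  have hεsq : ∀ g, ε g * ε g = 1 := fun g => mul_self_eq_one_iff.2 (hεval g)
  have hne : (compatJSet ω G ε).Nonempty := compatJSet_nonempty halt hnd hG hεsq hsesq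
  exact ⟨hne, contractibleSpace_compatJSet hne.some_mem⟩
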